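/- Let n ≥ 3 be an odd integer and let j be an odd integer with j ≢ n (mod 2n). Let φ be the ring endomorphism of ℤ[z_0, …, z_{2n−1}] sending z_a to −1 for each even a with 2 ≤ a ≤ 2n−2 and fixing the other variables. Then there exist ε ∈ {1,−1} and a monomial M in ℤ[z_0, …, z_{2n−1}] such that φ(R_n(F_{j,n+1})) = ε·M·(1+z_0)^{n+2}. -/

import Mathlib

/-!
Write `k = n + 1`. Covering relations in `P_k` join `Q_k` to `Q_{k+1}`, and since `n` and `j` are
odd, the elements of `Q_{k+1}` carry even indices, so `φ ∘ R_n` gives them weight `-1` unless the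
index is `0` modulo `2n`. Group the order ideals by their intersection with `Q_k`: within a group,
an ideal is determined by an arbitrary subset of the elements of `Q_{k+1}` that are neither forced
in nor forced out, so a group contributes a product of weights times `∏ (1 + weight)` over these
free elements (`fiber_sum`). A group with a free element of weight `-1` contributes nothing.

The intersections of order ideals with `Q_k` are alternating sign matrices of size `n + 1`, encoded
here by their corner sums (`height_isCornerSum`, `idealOf_closed`), and the free elements are the
entries `+1` (`mem_freeSet_iff`). With `j = n + 2m`, the element of `Q_{k+1}` in matrix position
`(x, y)`, `0 ≤ x, y ≤ n`, has index `0` if and only if `2x + y + m ≡ 0 (mod n)`. As `n` is odd and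
`n ∤ m`, this congruence has one solution in each row and column, except for one interior row `x₀`
and one interior column `y₀`, where the solutions are the two end positions. The only alternating
sign matrix with positive entries confined to these positions has `+1` at all of them and `-1` at
`(x₀, y₀)` (`Pattern.unique`, `Pattern.isJump_iff`). So exactly one group survives; it has `n + 2`
free elements (`Pattern.card_cells`), all of weight `z_0`, and the remaining factor is a signed
monomial.
-/

open MvPolynomial
open scoped Classical

noncomputable section

/-- The set `Q_k`: triples `(r,s,t)` with `|r|+|s| ≤ k-2`, `r+s ≡ k (mod 2)`,
`t ≡ 2|s|-k+2 (mod 4)` and `2|s|-k+2 ≤ t ≤ k-2-2|r|`. -/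
def pentagramQ (k : ℤ) : Set (ℤ × ℤ × ℤ) :=
  {p | |p.1| + |p.2.1| ≤ k - 2 ∧ (2 : ℤ) ∣ (p.1 + p.2.1 - k) ∧
    (4 : ℤ) ∣ (p.2.2 - (2 * |p.2.1| - k + 2)) ∧
    2 * |p.2.1| - k + 2 ≤ p.2.2 ∧ p.2.2 ≤ k - 2 - 2 * |p.1|}

/-- The set `P_k = Q_k ∪ Q_{k+1}`. -/
def pentagramP (k : ℤ) : Set (ℤ × ℤ × ℤ) := pentagramQ k ∪ pentagramQ (k + 1)

/-- The covering relation: `(r',s',t')` covers `(r,s,t)` iff `t' = t + 1` and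
`|r'-r| + |s'-s| = 1`. -/
def pentagramCovers (x y : ℤ × ℤ × ℤ) : Prop :=
  y.2.2 = x.2.2 + 1 ∧ |y.1 - x.1| + |y.2.1 - x.2.1| = 1

/-- The partial order on `P_k`: the reflexive-transitive closure of the covering
relation within `P_k`. -/
def pentagramLe (k : ℤ) : (ℤ × ℤ × ℤ) → (ℤ × ℤ × ℤ) → Prop :=
  Relation.ReflTransGen
    (fun x y => x ∈ pentagramP k ∧ y ∈ pentagramP k ∧ pentagramCovers x y)

/-- An order ideal of `P_k`: a downward-closed subset of `P_k`. -/
def IsPentagramOrderIdeal (k : ℤ) (I : Set (ℤ × ℤ × ℤ)) : Prop :=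
  I ⊆ pentagramP k ∧ ∀ x y, y ∈ I → pentagramLe k x y → x ∈ I

/-- `P_k` realized as a `Finset` (it is contained in the displayed finite box). -/
def pentagramPFinset (k : ℤ) : Finset (ℤ × ℤ × ℤ) :=
  ((Finset.Icc (-(k-1)) (k-1)) ×ˢ (Finset.Icc (-(k-1)) (k-1)) ×ˢ
    (Finset.Icc (-(k-1)) (k-1))).filter (fun p => p ∈ pentagramP k)

/-- The F-polynomial `F_{j,k} = Σ_{order ideals I of P_k} Π_{(r,s,t) ∈ I} y_{3r+s+j}`,
as an element of `ℤ[y_i : i ∈ ℤ] = MvPolynomial ℤ ℤ`. -/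
def pentagramF (j k : ℤ) : MvPolynomial ℤ ℤ :=
  ∑ I ∈ (pentagramPFinset k).powerset.filter
      (fun I : Finset (ℤ × ℤ × ℤ) => IsPentagramOrderIdeal k (↑I : Set (ℤ × ℤ × ℤ))),
    ∏ p ∈ I, X (3 * p.1 + p.2.1 + j)

/-- The ring endomorphism of `ℤ[y_i : i ∈ ℤ]` sending `y_i ↦ -1` for `i ∈ S`
and fixing the other variables; `substNeg S F` is `F|_S`. -/
def substNeg (S : Set ℤ) : MvPolynomial ℤ ℤ →+* MvPolynomial ℤ ℤ :=
  (MvPolynomial.aeval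
    (fun i : ℤ => if i ∈ S then (-1 : MvPolynomial ℤ ℤ) else X i)).toRingHom

/-- The arithmetic progression `[a,b]_d = {a, a+d, a+2d, …, b}` (as a subset of `ℤ`). -/
def AP (a b d : ℤ) : Set ℤ := {x | a ≤ x ∧ x ≤ b ∧ d ∣ (x - a)}

/-- The ring homomorphism `R_n : ℤ[y_i : i ∈ ℤ] → ℤ[z_0, …, z_{2n-1}]` sending
`y_i` to `z_{i mod 2n}` (the variables `z_a` being indexed by `ZMod (2n)`). -/
def pentagramR (n : ℕ) : MvPolynomial ℤ ℤ →+* MvPolynomial (ZMod (2 * n)) ℤ :=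
  (MvPolynomial.aeval
    (fun i : ℤ => (X (i : ZMod (2 * n)) : MvPolynomial (ZMod (2 * n)) ℤ))).toRingHom

/-- The ring endomorphism `φ` of `ℤ[z_0, …, z_{2n-1}]` sending `z_a ↦ -1` for each
even `a` with `2 ≤ a ≤ 2n-2`, and fixing the other variables. -/
def pentagramPhi (n : ℕ) : MvPolynomial (ZMod (2 * n)) ℤ →+* MvPolynomial (ZMod (2 * n)) ℤ :=
  (MvPolynomial.aeval
    (fun a : ZMod (2 * n) =>
      if 2 ≤ a.val ∧ a.val ≤ 2 * n - 2 ∧ 2 ∣ a.val then (-1 : MvPolynomial (ZMod (2 * n)) ℤ)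
      else X a)).toRingHom


/-! ### Corner-sum matrices -/

/-- Corner-sum matrices of alternating sign matrices of size `n + 1`: `C x y` is the sum of the
entries in positions `(x', y')` with `x' < x` and `y' < y`. Only arguments up to `n + 1` matter. -/
structure IsCornerSum (n : ℕ) (C : ℕ → ℕ → ℕ) : Prop where
  left : ∀ y ≤ n + 1, C 0 y = 0
  bot : ∀ x ≤ n + 1, C x 0 = 0
  right : ∀ y ≤ n + 1, C (n + 1) y = y
  top : ∀ x ≤ n + 1, C x (n + 1) = x
  stepx : ∀ x ≤ n, ∀ y ≤ n + 1, C x y ≤ C (x + 1) y ∧ C (x + 1) y ≤ C x y + 1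
  stepy : ∀ x ≤ n + 1, ∀ y ≤ n, C x y ≤ C x (y + 1) ∧ C x (y + 1) ≤ C x y + 1

/-- The alternating sign matrix with corner sums `C` has entry `+1` at `(x, y)`. -/
def IsJump (C : ℕ → ℕ → ℕ) (x y : ℕ) : Prop :=
  C (x + 1) y = C x y ∧ C x (y + 1) = C x y ∧ C (x + 1) (y + 1) = C x y + 1

lemma IsCornerSum.le_x {n : ℕ} {C : ℕ → ℕ → ℕ} (h : IsCornerSum n C) (x y : ℕ)
    (hx : x ≤ n + 1) (hy : y ≤ n + 1) : C x y ≤ x := by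
  induction x with
  | zero => simp [h.left y hy]
  | succ x ih =>
    have := h.stepx x (by omega) y hy
    have := ih (by omega)
    omega

lemma IsCornerSum.le_y {n : ℕ} {C : ℕ → ℕ → ℕ} (h : IsCornerSum n C) (x y : ℕ)
    (hx : x ≤ n + 1) (hy : y ≤ n + 1) : C x y ≤ y := by
  induction y with
  | zero => simp [h.bot x hx]
  | succ y ih =>
    have := h.stepy x hx y (by omega)
    have := ih (by omega)
    omega

lemma IsCornerSum.add_le {n : ℕ} {C : ℕ → ℕ → ℕ} (h : IsCornerSum n C) (x y : ℕ)
    (hx : x ≤ n + 1) (hy : y ≤ n + 1) : x + y ≤ C x y + (n + 1) := by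
  induction hx using Nat.decreasingInduction with
  | self => rw [h.right y hy]; omega
  | of_succ x hx ih =>
    have := h.stepx x (by omega) y hy
    omega

/-! ### The alternating sign matrix with a prescribed support of its positive entries -/

/-- A set `Z` of positions in `[0, n]²` with exactly one element `(x, σ x)` in each row `x ≠ x₀` and
the two elements `(x₀, 0)`, `(x₀, n)` in row `x₀`, and likewise for columns, with `τ` and `y₀`. -/
structure Pattern (n : ℕ) (Z : ℕ → ℕ → Prop) (σ τ : ℕ → ℕ) (x₀ y₀ : ℕ) : Prop where
  x₀_pos : 0 < x₀
  x₀_lt : x₀ < n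
  y₀_pos : 0 < y₀
  y₀_lt : y₀ < n
  σ_lt : ∀ x, σ x < n
  τ_lt : ∀ y, τ y < n
  σ_x₀ : σ x₀ = 0
  τ_y₀ : τ y₀ = 0
  iff_σ : ∀ x ≤ n, ∀ y ≤ n, Z x y ↔ y = σ x ∨ (x = x₀ ∧ y = n)
  iff_τ : ∀ x ≤ n, ∀ y ≤ n, Z x y ↔ x = τ y ∨ (x = n ∧ y = y₀)

/-- The congruence `2x + y + m ≡ 0 (mod n)` has one solution modulo `n` in each row and, `n` being
odd, in each column. As `0` and `n` are congruent, one row and one column have two solutions in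
`[0, n]`; these are interior as `n ∤ m`. -/
lemma exists_pattern (n : ℕ) (hn : 3 ≤ n) (hodd : Odd (n : ℤ)) (m : ℤ) (hm : ¬ (n : ℤ) ∣ m) :
    ∃ σ τ x₀ y₀, Pattern n (fun x y => (n : ℤ) ∣ 2 * x + y + m) σ τ x₀ y₀ := by
  obtain ⟨u, hu⟩ := hodd
  have hn0 : (0 : ℤ) < n := by omega
  set σ : ℕ → ℕ := fun x => ((-(m + 2 * x)) % (n : ℤ)).toNat with hσ
  set τ : ℕ → ℕ := fun y => ((-(m + y)) * (u + 1) % (n : ℤ)).toNat with hτ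
  have σ_lt : ∀ x, σ x < n := fun x => by
    have := Int.emod_lt_of_pos (-(m + 2 * x)) hn0
    simp only [hσ]; omega
  have τ_lt : ∀ y, τ y < n := fun y => by
    have := Int.emod_lt_of_pos ((-(m + y)) * (u + 1)) hn0
    simp only [hτ]; omega
  have σ_cast : ∀ x, (σ x : ℤ) = (-(m + 2 * x)) % (n : ℤ) := fun x =>
    Int.toNat_of_nonneg (Int.emod_nonneg _ hn0.ne')
  have τ_cast : ∀ y, (τ y : ℤ) = (-(m + y)) * (u + 1) % (n : ℤ) := fun x =>
    Int.toNat_of_nonneg (Int.emod_nonneg _ hn0.ne')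
  have σ_dvd : ∀ x, (n : ℤ) ∣ 2 * x + σ x + m := fun x => by
    rw [σ_cast]
    refine ⟨-((-(m + 2 * x)) / (n : ℤ)), ?_⟩
    have := Int.emod_add_mul_ediv (-(m + 2 * x)) (n : ℤ)
    linarith
  have τ_dvd : ∀ y, (n : ℤ) ∣ 2 * τ y + y + m := fun y => by
    rw [τ_cast]
    refine ⟨-(m + y) - 2 * ((-(m + y)) * (u + 1) / (n : ℤ)), ?_⟩
    have := Int.emod_add_mul_ediv ((-(m + y)) * (u + 1)) (n : ℤ)
    have h2 : (n : ℤ) * (-(m + y)) = (2 * u + 1) * (-(m + y)) := by rw [hu]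
    linarith
  -- representatives in `[0, n)` are unique
  have small : ∀ a : ℤ, (n : ℤ) ∣ a → -n < a → a < n → a = 0 := fun a h1 h2 h3 =>
    Int.eq_zero_of_abs_lt_dvd h1 (abs_lt.2 ⟨h2, h3⟩)
  have σ_uniq : ∀ x y : ℕ, y < n → (n : ℤ) ∣ 2 * x + y + m → y = σ x := fun x y hy h => by
    have h1 := dvd_sub h (σ_dvd x)
    have h2 : (n : ℤ) ∣ (y : ℤ) - σ x := by
      have e : (y : ℤ) - σ x = (2 * x + y + m) - (2 * x + σ x + m) := by ring
      rw [e]; exact h1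
    have := small ((y : ℤ) - σ x) h2 (by have := σ_lt x; omega) (by omega)
    omega
  have τ_uniq : ∀ x y : ℕ, x < n → (n : ℤ) ∣ 2 * x + y + m → x = τ y := fun x y hx h => by
    have h1 := dvd_sub h (τ_dvd y)
    have h2 : (n : ℤ) ∣ 2 * ((x : ℤ) - τ y) := by
      have e : 2 * ((x : ℤ) - τ y) = (2 * x + y + m) - (2 * τ y + y + m) := by ring
      rw [e]; exact h1
    have h3 : IsCoprime (n : ℤ) 2 := ⟨1, -u, by rw [hu]; ring⟩
    have := small ((x : ℤ) - τ y) (h3.dvd_of_dvd_mul_left h2) (by have := τ_lt y; omega)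
      (by omega)
    omega
  have hσ0 : 0 < σ 0 := by
    rcases Nat.eq_zero_or_pos (σ 0) with h | h
    · exact absurd (by simpa [h] using σ_dvd 0) hm
    · exact h
  have hτ0 : 0 < τ 0 := by
    rcases Nat.eq_zero_or_pos (τ 0) with h | h
    · exact absurd (by simpa [h] using τ_dvd 0) hm
    · exact h
  have σx : σ (τ 0) = 0 := (σ_uniq (τ 0) 0 (by omega) (τ_dvd 0)).symm
  have τy : τ (σ 0) = 0 := (τ_uniq 0 (σ 0) (by omega) (σ_dvd 0)).symm
  have shifty : ∀ x : ℕ, (n : ℤ) ∣ 2 * x + (n : ℕ) + m ↔ (n : ℤ) ∣ 2 * x + (0 : ℕ) + m :=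
    fun x => by
      rw [show (2 * x + (n : ℕ) + m : ℤ) = (2 * x + (0 : ℕ) + m) + n by push_cast; ring]
      exact dvd_add_self_right
  have shiftx : ∀ y : ℕ, (n : ℤ) ∣ 2 * (n : ℕ) + y + m ↔ (n : ℤ) ∣ 2 * (0 : ℕ) + y + m :=
    fun y => by
      rw [show (2 * (n : ℕ) + y + m : ℤ) = (2 * (0 : ℕ) + y + m) + n * 2 by push_cast; ring]
      exact (Int.dvd_add_left (dvd_mul_right _ _))
  refine ⟨σ, τ, τ 0, σ 0, ⟨hτ0, τ_lt 0, hσ0, σ_lt 0, σ_lt, τ_lt, σx, τy, ?_, ?_⟩⟩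
  · intro x hx y hy
    constructor
    · intro h
      rcases hy.lt_or_eq with hy | rfl
      · exact Or.inl (σ_uniq x y hy h)
      · have h := (shifty x).1 h
        rcases hx.lt_or_eq with hx | rfl
        · exact Or.inr ⟨τ_uniq x 0 hx h, rfl⟩
        · exact absurd (by simpa using (shiftx 0).1 h) hm
    · rintro (rfl | ⟨rfl, rfl⟩)
      · exact σ_dvd x
      · exact (shifty _).2 (τ_dvd 0)
  · intro x hx y hy
    constructor
    · intro h
      rcases hx.lt_or_eq with hx | rfl
      · exact Or.inl (τ_uniq x y hx h)
      · have h := (shiftx y).1 h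
        rcases hy.lt_or_eq with hy | rfl
        · exact Or.inr ⟨rfl, σ_uniq 0 y hy h⟩
        · exact absurd (by simpa using (shifty 0).1 h) hm
    · rintro (rfl | ⟨rfl, rfl⟩)
      · exact τ_dvd y
      · exact (shiftx _).2 (σ_dvd 0)

/-- Partial row sums of the matrix with entries `1` on `Z`, `-1` at `(x₀, y₀)` and `0` elsewhere:
the sum of the entries of row `x` in columns less than `y`. With `σ`, `x₀` exchanged with `τ`, `y₀`
it yields the partial column sums. -/
def rowSum (n : ℕ) (σ : ℕ → ℕ) (x₀ y₀ x y : ℕ) : ℕ :=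
  if x = x₀ then (if (0 < y ∧ y ≤ y₀) ∨ n < y then 1 else 0) else if σ x < y then 1 else 0

/-- Corner sums of the matrix described at `rowSum`. -/
def cornerSum (n : ℕ) (σ : ℕ → ℕ) (x₀ y₀ x y : ℕ) : ℕ :=
  ∑ i ∈ Finset.range x, rowSum n σ x₀ y₀ i y

section
variable {n : ℕ} {Z : ℕ → ℕ → Prop} {σ τ : ℕ → ℕ} {x₀ y₀ : ℕ}

/-- The differences of partial row sums and of partial column sums are the same matrix entries. -/
lemma Pattern.exchange (h : Pattern n Z σ τ x₀ y₀) (x y : ℕ) (hx : x ≤ n) (hy : y ≤ n) :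
    rowSum n σ x₀ y₀ x (y + 1) + rowSum n τ y₀ x₀ y x =
      rowSum n σ x₀ y₀ x y + rowSum n τ y₀ x₀ y (x + 1) := by
  have := h.x₀_pos
  have := h.x₀_lt
  have := h.y₀_pos
  have := h.y₀_lt
  have := h.σ_lt x
  have := h.τ_lt y
  have := h.σ_x₀
  have := h.τ_y₀
  have h1 := h.iff_σ x hx y hy
  have h2 := h.iff_τ x hx y hy
  rw [h1] at h2
  unfold rowSum
  by_cases e1 : x = x₀ <;> by_cases e2 : y = y₀
  · subst e1; subst e2; simp only [if_true]; split_ifs <;> omega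
  · subst e1; simp only [if_true, e2, if_false]; split_ifs <;> omega
  · subst e2; simp only [if_true, e1, if_false]; split_ifs <;> omega
  · simp only [e1, e2, if_false]; split_ifs <;> omega

lemma cornerSum_succ_left (x y : ℕ) : cornerSum n σ x₀ y₀ (x + 1) y =
    cornerSum n σ x₀ y₀ x y + rowSum n σ x₀ y₀ x y := by
  simp [cornerSum, Finset.sum_range_succ]

lemma Pattern.cornerSum_succ_right (h : Pattern n Z σ τ x₀ y₀) (x y : ℕ) (hx : x ≤ n + 1)
    (hy : y ≤ n) : cornerSum n σ x₀ y₀ x (y + 1) =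
      cornerSum n σ x₀ y₀ x y + rowSum n τ y₀ x₀ y x := by
  induction x with
  | zero => simp [cornerSum, rowSum]
  | succ x ih =>
    have := ih (by omega)
    have := h.exchange x y (by omega) hy
    simp only [cornerSum_succ_left]
    omega

lemma rowSum_le_one (x y : ℕ) : rowSum n σ x₀ y₀ x y ≤ 1 := by
  unfold rowSum; split_ifs <;> omega

lemma Pattern.isCornerSum (h : Pattern n Z σ τ x₀ y₀) :
    IsCornerSum n (cornerSum n σ x₀ y₀) where
  left y _ := by simp [cornerSum]
  bot x _ := by simp [cornerSum, rowSum]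
  right y hy := by
    induction y with
    | zero => simp [cornerSum, rowSum]
    | succ y ih =>
      rw [h.cornerSum_succ_right _ _ le_rfl (by omega), ih (by omega)]
      have := h.τ_lt y
      unfold rowSum
      split_ifs <;> omega
  top x hx := by
    induction x with
    | zero => simp [cornerSum]
    | succ x ih =>
      rw [cornerSum_succ_left, ih (by omega)]
      have := h.σ_lt x
      unfold rowSum
      split_ifs <;> omega
  stepx x hx y hy := by
    rw [cornerSum_succ_left]
    have := rowSum_le_one (n := n) (σ := σ) (x₀ := x₀) (y₀ := y₀) x y
    omega
  stepy x hx y hy := by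
    rw [h.cornerSum_succ_right x y hx hy]
    have := rowSum_le_one (n := n) (σ := τ) (x₀ := y₀) (y₀ := x₀) y x
    omega

lemma Pattern.isJump_iff (h : Pattern n Z σ τ x₀ y₀) (x y : ℕ) (hx : x ≤ n) (hy : y ≤ n) :
    IsJump (cornerSum n σ x₀ y₀) x y ↔ Z x y := by
  have e : IsJump (cornerSum n σ x₀ y₀) x y ↔ rowSum n σ x₀ y₀ x y = 0 ∧
      rowSum n τ y₀ x₀ y x = 0 ∧ rowSum n σ x₀ y₀ x (y + 1) = 1 := by
    unfold IsJump
    rw [cornerSum_succ_left, cornerSum_succ_left, h.cornerSum_succ_right x y (by omega) hy]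
    omega
  rw [e]
  have := h.x₀_pos
  have := h.x₀_lt
  have := h.y₀_pos
  have := h.y₀_lt
  have := h.σ_lt x
  have := h.τ_lt y
  have := h.σ_x₀
  have := h.τ_y₀
  have h1 := h.iff_σ x hx y hy
  have h2 := h.iff_τ x hx y hy
  rw [h1] at h2
  rw [h1]
  unfold rowSum
  by_cases e1 : x = x₀ <;> by_cases e2 : y = y₀
  · subst e1; subst e2; simp only [if_true]; split_ifs <;> simp <;> omega
  · subst e1; simp only [if_true, e2, if_false]; split_ifs <;> simp <;> omega
  · subst e2; simp only [if_true, e1, if_false]; split_ifs <;> simp <;> omega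
  · simp only [e1, e2, if_false]; split_ifs <;> simp <;> omega

/-- Outside row `x₀`, an alternating sign matrix with positive entries only on `Z` is `1` at `σ x`
and `0` elsewhere. -/
lemma Pattern.row_eq (h : Pattern n Z σ τ x₀ y₀) {C : ℕ → ℕ → ℕ} (hC : IsCornerSum n C)
    (hZ : ∀ x ≤ n, ∀ y ≤ n, IsJump C x y → Z x y) (x y : ℕ) (hx : x ≤ n) (hx₀ : x ≠ x₀)
    (hy : y ≤ n + 1) : C (x + 1) y = C x y + rowSum n σ x₀ y₀ x y := by
  -- the row difference can only pass from `0` to `1` at `y = σ x`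
  have key : ∀ y ≤ n, y ≠ σ x → C (x + 1) y = C x y → C (x + 1) (y + 1) = C x (y + 1) := by
    intro y hy hne h0
    by_contra hcon
    have a1 := hC.stepx x hx (y + 1) (by omega)
    have a2 := hC.stepy x (by omega) y hy
    have a3 := hC.stepy (x + 1) (by omega) y hy
    have := (h.iff_σ x hx y hy).1 (hZ x hx y hy ⟨h0, by omega, by omega⟩)
    omega
  have low : ∀ y ≤ σ x, C (x + 1) y = C x y := by
    intro y hy
    have := h.σ_lt x
    induction y with
    | zero => rw [hC.bot _ (by omega), hC.bot _ (by omega)]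
    | succ y ih => exact key y (by omega) (by omega) (ih (by omega))
  have high : ∀ y ≤ n + 1, σ x < y → C (x + 1) y = C x y + 1 := by
    intro y hy
    induction hy using Nat.decreasingInduction with
    | self => intro _; rw [hC.top _ (by omega), hC.top _ (by omega)]
    | of_succ y hy ih =>
      intro hlt
      have a1 := hC.stepx x hx y (by omega)
      have := ih (by omega)
      by_contra hcon
      have := key y (by omega) (by omega) (by omega)
      omega
  simp only [rowSum, hx₀, if_false]
  split_ifs with hlt
  · exact high y hy hlt
  · exact low y (by omega)

/-- There is only one alternating sign matrix whose positive entries lie in `Z`: all rows but `x₀`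
are known, and row `x₀` is then given by the column sums. -/
lemma Pattern.unique (h : Pattern n Z σ τ x₀ y₀) {C : ℕ → ℕ → ℕ} (hC : IsCornerSum n C)
    (hZ : ∀ x ≤ n, ∀ y ≤ n, IsJump C x y → Z x y) (x y : ℕ) (hx : x ≤ n + 1)
    (hy : y ≤ n + 1) : C x y = cornerSum n σ x₀ y₀ x y := by
  have := h.x₀_lt
  rcases Nat.lt_or_ge x₀ x with hlt | hge
  · -- rows above `x₀` are reached from the boundary `x = n + 1`
    induction hx using Nat.decreasingInduction with
    | self => rw [hC.right y hy, h.isCornerSum.right y hy]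
    | of_succ x hx ih =>
      have h1 := ih (by omega)
      rw [cornerSum_succ_left, h.row_eq hC hZ x y (by omega) (by omega) hy] at h1
      omega
  · induction x with
    | zero => rw [hC.left y hy, h.isCornerSum.left y hy]
    | succ x ih =>
      rw [cornerSum_succ_left, h.row_eq hC hZ x y (by omega) (by omega) hy,
        ih (by omega) (by omega)]

end

/-! ### Ideals of a bipartite covering relation -/

/-- `I` is closed under passing to covered elements of `P`; for `I ⊆ P` this means that `I` is an
order ideal of the poset on `P` generated by the covering relation `cov` (`cov p q`: `q` covers
`p`). -/
def IsCoverClosed {α : Type*} (P : Finset α) (cov : α → α → Prop) (I : Finset α) : Prop :=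
  ∀ p ∈ P, ∀ q ∈ I, cov p q → p ∈ I

/-- Elements outside `Q` that may be added to or removed from the ideal `I` without violating any
covering relation: everything they cover lies in `I`, and nothing in `I` covers them. -/
def freeSet {α : Type*} (P : Finset α) (Q : α → Prop) (cov : α → α → Prop) (I : Finset α) :
    Finset α :=
  P.filter fun q => ¬ Q q ∧ (∀ p ∈ P, cov p q → p ∈ I) ∧ ∀ p ∈ I, ¬ cov q p

/-- The part of the ideal `I` that every ideal with the same `Q`-part contains. -/
def forcedSet {α : Type*} (P : Finset α) (Q : α → Prop) (cov : α → α → Prop) (I : Finset α) :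
    Finset α :=
  I.filter fun p => p ∉ freeSet P Q cov I

lemma mem_freeSet {α : Type*} {P : Finset α} {Q : α → Prop} {cov : α → α → Prop}
    {I : Finset α} {q : α} : q ∈ freeSet P Q cov I ↔
      q ∈ P ∧ ¬ Q q ∧ (∀ p ∈ P, cov p q → p ∈ I) ∧ ∀ p ∈ I, ¬ cov q p := by
  rw [freeSet, Finset.mem_filter]

/-- If every covering relation joins `Q` to its complement, then the ideals with a prescribed
`Q`-part are obtained from one of them by choosing an arbitrary subset of the free elements. -/
lemma fiber_sum {α R : Type*} [CommRing R] (P : Finset α) (Q : α → Prop) (cov : α → α → Prop)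
    (hbip : ∀ p ∈ P, ∀ q ∈ P, cov p q → (Q p ↔ ¬ Q q)) (g : α → R) (J : Finset α)
    (hJP : J ⊆ P) (hJ : IsCoverClosed P cov J) :
    ∑ I ∈ P.powerset.filter (fun I => IsCoverClosed P cov I ∧ I.filter Q = J.filter Q),
        ∏ p ∈ I, g p =
      (∏ p ∈ forcedSet P Q cov J, g p) *
        ∏ q ∈ freeSet P Q cov J, (1 + g q) := by
  rw [forcedSet]
  set Fr := freeSet P Q cov J with hFr
  have memFr : ∀ q, q ∈ Fr ↔ q ∈ P ∧ ¬ Q q ∧ (∀ p ∈ P, cov p q → p ∈ J) ∧ ∀ p ∈ J, ¬ cov q p :=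
    fun q => mem_freeSet
  have hdisj : ∀ B ⊆ Fr, Disjoint (J.filter fun p => p ∉ Fr) B := fun B hB =>
    Finset.disjoint_left.2 fun p hp hpB => (Finset.mem_filter.1 hp).2 (hB hpB)
  simp_rw [add_comm (1 : R)]
  rw [Finset.prod_add_one, Finset.mul_sum]
  symm
  refine Finset.sum_bij' (fun B _ => (J.filter fun p => p ∉ Fr) ∪ B)
    (fun I _ => I.filter (· ∈ Fr)) ?_ ?_ ?_ ?_ ?_
  · intro B hB
    have hB := Finset.mem_powerset.1 hB
    simp only [Finset.mem_filter, Finset.mem_powerset]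
    refine ⟨?_, ?_, ?_⟩
    · intro p hp
      rcases Finset.mem_union.1 hp with hp | hp
      · exact hJP (Finset.mem_filter.1 hp).1
      · exact ((memFr p).1 (hB hp)).1
    · intro p hp q hq hpq
      refine Finset.mem_union_left _ (Finset.mem_filter.2 ?_)
      rcases Finset.mem_union.1 hq with hq | hq
      · have hq := (Finset.mem_filter.1 hq).1
        exact ⟨hJ p hp q hq hpq, fun h => ((memFr p).1 h).2.2.2 q hq hpq⟩
      · have hq := (memFr q).1 (hB hq)
        exact ⟨hq.2.2.1 p hp hpq, fun h => ((memFr p).1 h).2.1 ((hbip p hp q hq.1 hpq).2 hq.2.1)⟩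
    · ext p
      simp only [Finset.mem_filter, Finset.mem_union]
      constructor
      · rintro ⟨h | h, hQ⟩
        · exact ⟨h.1, hQ⟩
        · exact absurd hQ ((memFr p).1 (hB h)).2.1
      · rintro ⟨h, hQ⟩
        exact ⟨Or.inl ⟨h, fun h => ((memFr p).1 h).2.1 hQ⟩, hQ⟩
  · intro I _
    exact Finset.mem_powerset.2 fun p hp => (Finset.mem_filter.1 hp).2
  · intro B hB
    have hB := Finset.mem_powerset.1 hB
    ext q
    simp only [Finset.mem_filter, Finset.mem_union]
    constructor
    · rintro ⟨h | h, hF⟩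
      · exact absurd hF h.2
      · exact h
    · exact fun h => ⟨Or.inr h, hB h⟩
  · intro I hI
    simp only [Finset.mem_filter, Finset.mem_powerset] at hI
    obtain ⟨hIP, hI, hIQ⟩ := hI
    have hQ : ∀ p, Q p → (p ∈ I ↔ p ∈ J) := fun p hp => by
      have := Finset.ext_iff.1 hIQ p
      simpa [hp] using this
    ext q
    simp only [Finset.mem_union, Finset.mem_filter]
    -- two ideals with the same `Q`-part agree off the free elements
    have half : ∀ I J : Finset α, I ⊆ P → IsCoverClosed P cov I → IsCoverClosed P cov J →
        (∀ p, Q p → (p ∈ I ↔ p ∈ J)) → q ∈ I →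
        (¬ Q q → ∃ p, (p ∈ P ∧ cov p q ∧ p ∉ I) ∨ (p ∈ I ∧ p ∈ J ∧ cov q p)) → q ∈ J := by
      intro I J hIP hI hJ hIJ hq hex
      by_cases hQq : Q q
      · exact (hIJ q hQq).1 hq
      · obtain ⟨p, ⟨h1, h2, h3⟩ | ⟨h1, h2, h3⟩⟩ := hex hQq
        · exact absurd (hI p h1 q hq h2) h3
        · exact hJ q (hIP hq) p h2 h3
    have nf : q ∈ P → q ∉ Fr → ¬ Q q → ∃ p, (p ∈ P ∧ cov p q ∧ p ∉ J ∧ p ∉ I) ∨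
        (p ∈ J ∧ p ∈ I ∧ cov q p) := by
      intro hq h hQq
      rw [memFr] at h
      push Not at h
      by_cases hall : ∀ p ∈ P, cov p q → p ∈ J
      · obtain ⟨p, hp, hc⟩ := h hq hQq hall
        have hQp : Q p := by
          by_contra hcon
          exact hQq ((hbip q hq p (hJP hp) hc).2 hcon)
        exact ⟨p, Or.inr ⟨hp, (hQ p hQp).2 hp, hc⟩⟩
      · push Not at hall
        obtain ⟨p, hp, hc, hpJ⟩ := hall
        have hQp : Q p := (hbip p hp q hq hc).2 hQq
        exact ⟨p, Or.inl ⟨hp, hc, hpJ, fun h => hpJ ((hQ p hQp).1 h)⟩⟩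
    constructor
    · rintro (⟨hq, hqF⟩ | ⟨hq, _⟩)
      · refine half J I hJP hJ hI (fun p hp => (hQ p hp).symm) hq fun hQq => ?_
        obtain ⟨p, hp⟩ := nf (hJP hq) hqF hQq
        exact ⟨p, by tauto⟩
      · exact hq
    · intro hq
      by_cases hqF : q ∈ Fr
      · exact Or.inr ⟨hq, hqF⟩
      · refine Or.inl ⟨half I J hIP hI hJ hQ hq fun hQq => ?_, hqF⟩
        obtain ⟨p, hp⟩ := nf (hIP hq) hqF hQq
        exact ⟨p, by tauto⟩
  · intro B hB
    rw [Finset.prod_union (hdisj B (Finset.mem_powerset.1 hB))]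

/-- A fibre whose ideals have a free element of weight `-1` contributes `0`; hence only the fibre of
`J` survives if it is the only one without such free elements. -/
lemma sum_ideals_eq {α R : Type*} [CommRing R] (P : Finset α) (Q : α → Prop) (cov : α → α → Prop)
    (hbip : ∀ p ∈ P, ∀ q ∈ P, cov p q → (Q p ↔ ¬ Q q)) (g : α → R) (J : Finset α)
    (hJP : J ⊆ P) (hJ : IsCoverClosed P cov J)
    (huniq : ∀ I ⊆ P, IsCoverClosed P cov I → (∀ q ∈ freeSet P Q cov I, g q ≠ -1) →
      I.filter Q = J.filter Q) :
    ∑ I ∈ P.powerset.filter (fun I => IsCoverClosed P cov I), ∏ p ∈ I, g p =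
      (∏ p ∈ forcedSet P Q cov J, g p) *
        ∏ q ∈ freeSet P Q cov J, (1 + g q) := by
  rw [← fiber_sum P Q cov hbip g J hJP hJ, ← Finset.sum_fiberwise_of_maps_to
    (g := fun I : Finset α => I.filter Q) (fun I hI => Finset.mem_image_of_mem _ hI)]
  rw [Finset.sum_eq_single (J.filter Q)]
  · rw [Finset.filter_filter]
  · intro A hA hne
    obtain ⟨I, hI, rfl⟩ := Finset.mem_image.1 hA
    rw [Finset.mem_filter, Finset.mem_powerset] at hI
    rw [Finset.filter_filter, fiber_sum P Q cov hbip g I hI.1 hI.2]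
    have : ∃ q ∈ freeSet P Q cov I, g q = -1 := by
      by_contra hcon
      push Not at hcon
      exact hne (huniq I hI.1 hI.2 hcon)
    obtain ⟨q, hq, hg⟩ := this
    rw [Finset.prod_eq_zero hq (by rw [hg]; ring), mul_zero]
  · intro h
    exact absurd (Finset.mem_image_of_mem _ (Finset.mem_filter.2 ⟨Finset.mem_powerset.2 hJP, hJ⟩)) h
/-! ### Coordinates on the poset -/

/-- Coordinates on `Q_{n+1}`. Its elements are the `vtx n x y c` with
`max 0 (x + y - (n + 1)) ≤ c < min x y`. -/
def vtx (n x y c : ℕ) : ℤ × ℤ × ℤ :=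
  ((x : ℤ) + y - (n + 1), (x : ℤ) - y, 2 * (x : ℤ) + 2 * y - (n + 1) - 2 - 4 * c)

/-- Coordinates on `Q_{n+2}`. Its elements are the `cell n x y d` with
`max 0 (x + y - n) ≤ d ≤ min x y`. The point `(x, y)` stands for the unit square whose corners
`(x, y)`, `(x + 1, y)`, `(x, y + 1)`, `(x + 1, y + 1)` index points of `Q_{n+1}`. -/
def cell (n x y d : ℕ) : ℤ × ℤ × ℤ :=
  ((x : ℤ) + y - n, (x : ℤ) - y, 2 * (x : ℤ) + 2 * y - n - 4 * d)

lemma vtx_mem_Q (n x y c : ℕ) :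
    vtx n x y c ∈ pentagramQ ((n : ℤ) + 1) ↔ c < x ∧ c < y ∧ x + y ≤ c + (n + 1) := by
  simp only [pentagramQ, vtx, Set.mem_ofPred_eq]
  rcases abs_cases ((x : ℤ) + y - (n + 1)) with ⟨h1, h1'⟩ | ⟨h1, h1'⟩ <;>
  rcases abs_cases ((x : ℤ) - y) with ⟨h2, h2'⟩ | ⟨h2, h2'⟩ <;>
  rw [h1, h2] <;> omega

lemma vtx_notMem_Q (n x y c : ℕ) : vtx n x y c ∉ pentagramQ ((n : ℤ) + 1 + 1) := by
  simp only [pentagramQ, vtx, Set.mem_ofPred_eq]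
  omega

lemma cell_mem_Q (n x y d : ℕ) :
    cell n x y d ∈ pentagramQ ((n : ℤ) + 1 + 1) ↔ d ≤ x ∧ d ≤ y ∧ x + y ≤ d + n := by
  simp only [pentagramQ, cell, Set.mem_ofPred_eq]
  rcases abs_cases ((x : ℤ) + y - n) with ⟨h1, h1'⟩ | ⟨h1, h1'⟩ <;>
  rcases abs_cases ((x : ℤ) - y) with ⟨h2, h2'⟩ | ⟨h2, h2'⟩ <;>
  rw [h1, h2] <;> omega

lemma cell_notMem_Q (n x y d : ℕ) : cell n x y d ∉ pentagramQ ((n : ℤ) + 1) := by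
  simp only [pentagramQ, cell, Set.mem_ofPred_eq]
  omega

lemma vtx_mem_P (n x y c : ℕ) :
    vtx n x y c ∈ pentagramP ((n : ℤ) + 1) ↔ c < x ∧ c < y ∧ x + y ≤ c + (n + 1) := by
  rw [pentagramP, Set.mem_union, vtx_mem_Q]
  simp [vtx_notMem_Q]

lemma cell_mem_P (n x y d : ℕ) :
    cell n x y d ∈ pentagramP ((n : ℤ) + 1) ↔ d ≤ x ∧ d ≤ y ∧ x + y ≤ d + n := by
  rw [pentagramP, Set.mem_union, cell_mem_Q]
  simp [cell_notMem_Q]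

lemma exists_vtx {n : ℕ} {p : ℤ × ℤ × ℤ} (hp : p ∈ pentagramQ ((n : ℤ) + 1)) :
    ∃ x y c, p = vtx n x y c := by
  obtain ⟨r, s, t⟩ := p
  simp only [pentagramQ, Set.mem_ofPred_eq] at hp
  refine ⟨((r + s + (n + 1)) / 2).toNat, ((r - s + (n + 1)) / 2).toNat,
    ((2 * r + (n + 1) - 2 - t) / 4).toNat, ?_⟩
  simp only [vtx, Prod.mk.injEq]
  rcases abs_cases r with ⟨h1, h1'⟩ | ⟨h1, h1'⟩ <;>
  rcases abs_cases s with ⟨h2, h2'⟩ | ⟨h2, h2'⟩ <;>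
  rw [h1, h2] at hp <;> omega

lemma exists_cell {n : ℕ} {p : ℤ × ℤ × ℤ} (hp : p ∈ pentagramQ ((n : ℤ) + 1 + 1)) :
    ∃ x y d, p = cell n x y d := by
  have hp' : p ∈ pentagramQ (((n + 1 : ℕ) : ℤ) + 1) := by push_cast; exact hp
  obtain ⟨x, y, d, rfl⟩ := exists_vtx hp'
  have hv := (vtx_mem_Q ..).1 hp'
  refine ⟨x - 1, y - 1, d, ?_⟩
  simp only [vtx, cell, Prod.mk.injEq]
  omega

lemma vtx_injective {n x y c x' y' c' : ℕ} (h : vtx n x y c = vtx n x' y' c') :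
    x = x' ∧ y = y' ∧ c = c' := by
  simp only [vtx, Prod.mk.injEq] at h
  omega

lemma cell_injective {n x y d x' y' d' : ℕ} (h : cell n x y d = cell n x' y' d') :
    x = x' ∧ y = y' ∧ d = d' := by
  simp only [cell, Prod.mk.injEq] at h
  omega

lemma vtx_ne_cell (n x y c x' y' d : ℕ) : vtx n x y c ≠ cell n x' y' d := by
  intro h
  simp only [vtx, cell, Prod.mk.injEq] at h
  omega

lemma covers_vtx_cell (n x y c x' y' d : ℕ) :
    pentagramCovers (vtx n x y c) (cell n x' y' d) ↔
      c = d ∧ ((x = x' + 1 ∧ y = y') ∨ (x = x' ∧ y = y' + 1)) := by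
  simp only [pentagramCovers, vtx, cell]
  rcases abs_cases ((x' : ℤ) + y' - n - (x + y - (n + 1))) with ⟨h1, h1'⟩ | ⟨h1, h1'⟩ <;>
  rcases abs_cases ((x' : ℤ) - y' - (x - y)) with ⟨h2, h2'⟩ | ⟨h2, h2'⟩ <;>
  rw [h1, h2] <;> omega

lemma covers_cell_vtx (n x y c x' y' d : ℕ) :
    pentagramCovers (cell n x' y' d) (vtx n x y c) ↔
      (c = d ∧ x = x' + 1 ∧ y = y' + 1) ∨ (d = c + 1 ∧ x = x' ∧ y = y') := by
  simp only [pentagramCovers, vtx, cell]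
  rcases abs_cases ((x : ℤ) + y - (n + 1) - (x' + y' - n)) with ⟨h1, h1'⟩ | ⟨h1, h1'⟩ <;>
  rcases abs_cases ((x : ℤ) - y - (x' - y')) with ⟨h2, h2'⟩ | ⟨h2, h2'⟩ <;>
  rw [h1, h2] <;> omega

lemma not_covers_vtx_vtx (n x y c x' y' c' : ℕ) :
    ¬ pentagramCovers (vtx n x y c) (vtx n x' y' c') := by
  simp only [pentagramCovers, vtx]
  omega

lemma not_covers_cell_cell (n x y d x' y' d' : ℕ) :
    ¬ pentagramCovers (cell n x y d) (cell n x' y' d') := by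
  simp only [pentagramCovers, cell]
  omega

lemma vtx_or_cell {n : ℕ} {p : ℤ × ℤ × ℤ} (hp : p ∈ pentagramP ((n : ℤ) + 1)) :
    (∃ x y c, p = vtx n x y c) ∨ ∃ x y d, p = cell n x y d :=
  hp.imp exists_vtx exists_cell

lemma mem_pentagramPFinset {n : ℕ} {p : ℤ × ℤ × ℤ} :
    p ∈ pentagramPFinset ((n : ℤ) + 1) ↔ p ∈ pentagramP ((n : ℤ) + 1) := by
  rw [pentagramPFinset, Finset.mem_filter, and_iff_right_iff_imp]
  intro hp
  simp only [Finset.mem_product, Finset.mem_Icc]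
  rcases vtx_or_cell hp with ⟨x, y, c, rfl⟩ | ⟨x, y, d, rfl⟩
  · rw [vtx_mem_P] at hp
    simp only [vtx]
    omega
  · rw [cell_mem_P] at hp
    simp only [cell]
    omega

lemma covers_bipartite (n : ℕ) : ∀ p ∈ pentagramPFinset ((n : ℤ) + 1),
    ∀ q ∈ pentagramPFinset ((n : ℤ) + 1), pentagramCovers p q →
      (p ∈ pentagramQ ((n : ℤ) + 1) ↔ ¬ q ∈ pentagramQ ((n : ℤ) + 1)) := by
  intro p hp q hq hpq
  rw [mem_pentagramPFinset] at hp hq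
  rcases vtx_or_cell hp with ⟨x, y, c, rfl⟩ | ⟨x, y, d, rfl⟩ <;>
  rcases vtx_or_cell hq with ⟨x', y', c', rfl⟩ | ⟨x', y', d', rfl⟩
  · exact (not_covers_vtx_vtx _ _ _ _ _ _ _ hpq).elim
  · rw [vtx_mem_P] at hp
    simp [cell_notMem_Q, vtx_mem_Q, hp]
  · rw [vtx_mem_P] at hq
    simp [cell_notMem_Q, vtx_mem_Q, hq]
  · exact (not_covers_cell_cell _ _ _ _ _ _ _ hpq).elim

lemma isPentagramOrderIdeal_iff {n : ℕ} {I : Finset (ℤ × ℤ × ℤ)}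
    (hI : I ⊆ pentagramPFinset ((n : ℤ) + 1)) :
    IsPentagramOrderIdeal ((n : ℤ) + 1) (I : Set (ℤ × ℤ × ℤ)) ↔
      IsCoverClosed (pentagramPFinset ((n : ℤ) + 1)) pentagramCovers I := by
  constructor
  · rintro ⟨_, h⟩ p hp q hq hpq
    exact h p q hq (Relation.ReflTransGen.single
      ⟨mem_pentagramPFinset.1 hp, mem_pentagramPFinset.1 (hI hq), hpq⟩)
  · intro h
    refine ⟨fun p hp => mem_pentagramPFinset.1 (hI hp), fun p q hq hpq => ?_⟩
    induction hpq using Relation.ReflTransGen.head_induction_on with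
    | refl => exact hq
    | head h1 _ ih => exact h _ (mem_pentagramPFinset.2 h1.1) _ ih h1.2.2

/-! ### Order ideals as corner-sum matrices -/

/-- The `Q_{n+1}`-part of `I`, extended to all levels: levels at or above `min x y` count as
contained in `I`. -/
def Above (n : ℕ) (I : Finset (ℤ × ℤ × ℤ)) (x y c : ℕ) : Prop :=
  x ≤ c ∨ y ≤ c ∨ vtx n x y c ∈ I

/-- The least level at which the column of `I` over `(x, y)` begins. -/
def height (n : ℕ) (I : Finset (ℤ × ℤ × ℤ)) (x y : ℕ) : ℕ :=
  Nat.find (p := Above n I x y) ⟨x, Or.inl le_rfl⟩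

section
variable {n : ℕ} {I : Finset (ℤ × ℤ × ℤ)}

lemma vtx_valid (hIP : I ⊆ pentagramPFinset ((n : ℤ) + 1)) {x y c : ℕ}
    (h : vtx n x y c ∈ I) : c < x ∧ c < y ∧ x + y ≤ c + (n + 1) :=
  (vtx_mem_P ..).1 (mem_pentagramPFinset.1 (hIP h))

lemma vtx_mem_cell_mem (hIP : I ⊆ pentagramPFinset ((n : ℤ) + 1))
    (hI : IsCoverClosed (pentagramPFinset ((n : ℤ) + 1)) pentagramCovers I) {x y c : ℕ}
    (h : vtx n (x + 1) (y + 1) c ∈ I) : cell n x y c ∈ I := by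
  have := vtx_valid hIP h
  refine hI _ (mem_pentagramPFinset.2 ((cell_mem_P ..).2 ?_)) _ h ((covers_cell_vtx ..).2 ?_)
  · omega
  · omega

lemma vtx_mem_cell_mem' (hIP : I ⊆ pentagramPFinset ((n : ℤ) + 1))
    (hI : IsCoverClosed (pentagramPFinset ((n : ℤ) + 1)) pentagramCovers I) {x y c : ℕ}
    (h : vtx n x y c ∈ I) : cell n x y (c + 1) ∈ I := by
  have := vtx_valid hIP h
  refine hI _ (mem_pentagramPFinset.2 ((cell_mem_P ..).2 ?_)) _ h ((covers_cell_vtx ..).2 ?_)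
  · omega
  · omega

lemma above_of_cell (hIP : I ⊆ pentagramPFinset ((n : ℤ) + 1))
    (hI : IsCoverClosed (pentagramPFinset ((n : ℤ) + 1)) pentagramCovers I) {x y d : ℕ}
    (h : cell n x y d ∈ I) : Above n I (x + 1) y d ∧ Above n I x (y + 1) d := by
  have hv := (cell_mem_P ..).1 (mem_pentagramPFinset.1 (hIP h))
  constructor
  · by_cases hy : y ≤ d
    · exact Or.inr (Or.inl hy)
    · exact Or.inr (Or.inr (hI _ (mem_pentagramPFinset.2 ((vtx_mem_P ..).2 (by omega))) _ h
        ((covers_vtx_cell ..).2 (by omega))))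
  · by_cases hx : x ≤ d
    · exact Or.inl hx
    · exact Or.inr (Or.inr (hI _ (mem_pentagramPFinset.2 ((vtx_mem_P ..).2 (by omega))) _ h
        ((covers_vtx_cell ..).2 (by omega))))

lemma above_down_x (hIP : I ⊆ pentagramPFinset ((n : ℤ) + 1))
    (hI : IsCoverClosed (pentagramPFinset ((n : ℤ) + 1)) pentagramCovers I) {x y c : ℕ}
    (h : Above n I (x + 1) y c) : Above n I x y c := by
  rcases h with h | h | h
  · exact Or.inl (by omega)
  · exact Or.inr (Or.inl h)
  · rcases y with _ | y
    · exact Or.inr (Or.inl (Nat.zero_le _))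
    · exact (above_of_cell hIP hI (vtx_mem_cell_mem hIP hI h)).2

lemma above_down_y (hIP : I ⊆ pentagramPFinset ((n : ℤ) + 1))
    (hI : IsCoverClosed (pentagramPFinset ((n : ℤ) + 1)) pentagramCovers I) {x y c : ℕ}
    (h : Above n I x (y + 1) c) : Above n I x y c := by
  rcases h with h | h | h
  · exact Or.inl h
  · exact Or.inr (Or.inl (by omega))
  · rcases x with _ | x
    · exact Or.inl (Nat.zero_le _)
    · exact (above_of_cell hIP hI (vtx_mem_cell_mem hIP hI h)).1

lemma above_up (hIP : I ⊆ pentagramPFinset ((n : ℤ) + 1))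
    (hI : IsCoverClosed (pentagramPFinset ((n : ℤ) + 1)) pentagramCovers I) {x y c : ℕ}
    (h : Above n I x y c) : Above n I (x + 1) y (c + 1) ∧ Above n I x (y + 1) (c + 1) := by
  rcases h with h | h | h
  · exact ⟨Or.inl (by omega), Or.inl (by omega)⟩
  · exact ⟨Or.inr (Or.inl (by omega)), Or.inr (Or.inl (by omega))⟩
  · exact above_of_cell hIP hI (vtx_mem_cell_mem' hIP hI h)

lemma above_height (x y : ℕ) : Above n I x y (height n I x y) :=
  Nat.find_spec (p := Above n I x y) _

lemma height_le_iff (hIP : I ⊆ pentagramPFinset ((n : ℤ) + 1))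
    (hI : IsCoverClosed (pentagramPFinset ((n : ℤ) + 1)) pentagramCovers I) {x y c : ℕ} :
    height n I x y ≤ c ↔ Above n I x y c := by
  constructor
  · intro h
    induction c, h using Nat.le_induction with
    | base => exact above_height x y
    | succ c _ ih => exact above_down_x hIP hI (above_up hIP hI ih).1
  · exact fun h => Nat.find_min' _ h

lemma height_isCornerSum (hIP : I ⊆ pentagramPFinset ((n : ℤ) + 1))
    (hI : IsCoverClosed (pentagramPFinset ((n : ℤ) + 1)) pentagramCovers I) :
    IsCornerSum n (height n I) where
  left y _ := Nat.le_zero.1 (Nat.find_min' _ (Or.inl le_rfl))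
  bot x _ := Nat.le_zero.1 (Nat.find_min' _ (Or.inr (Or.inl le_rfl)))
  right y hy := by
    refine le_antisymm (Nat.find_min' _ (Or.inr (Or.inl le_rfl))) ?_
    rcases above_height (n := n) (I := I) (n + 1) y with h | h | h
    · omega
    · exact h
    · have := vtx_valid hIP h
      omega
  top x hx := by
    refine le_antisymm (Nat.find_min' _ (Or.inl le_rfl)) ?_
    rcases above_height (n := n) (I := I) x (n + 1) with h | h | h
    · exact h
    · omega
    · have := vtx_valid hIP h
      omega
  stepx x hx y hy := by
    rw [height_le_iff hIP hI, height_le_iff hIP hI]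
    exact ⟨above_down_x hIP hI (above_height _ _), (above_up hIP hI (above_height _ _)).1⟩
  stepy x hx y hy := by
    rw [height_le_iff hIP hI, height_le_iff hIP hI]
    exact ⟨above_down_y hIP hI (above_height _ _), (above_up hIP hI (above_height _ _)).2⟩

lemma vtx_mem_iff (hIP : I ⊆ pentagramPFinset ((n : ℤ) + 1))
    (hI : IsCoverClosed (pentagramPFinset ((n : ℤ) + 1)) pentagramCovers I) {x y c : ℕ}
    (hx : c < x) (hy : c < y) : vtx n x y c ∈ I ↔ height n I x y ≤ c := by
  rw [height_le_iff hIP hI, Above]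
  constructor
  · exact fun h => Or.inr (Or.inr h)
  · rintro (h | h | h)
    · omega
    · omega
    · exact h

/-- The free cells of an ideal are exactly the entries `+1` of its alternating sign matrix. -/
lemma mem_freeSet_iff (hIP : I ⊆ pentagramPFinset ((n : ℤ) + 1))
    (hI : IsCoverClosed (pentagramPFinset ((n : ℤ) + 1)) pentagramCovers I) (q : ℤ × ℤ × ℤ) :
    q ∈ freeSet (pentagramPFinset ((n : ℤ) + 1)) (· ∈ pentagramQ ((n : ℤ) + 1))
        pentagramCovers I ↔
      ∃ x ≤ n, ∃ y ≤ n, IsJump (height n I) x y ∧ q = cell n x y (height n I x y) := by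
  have hC := height_isCornerSum hIP hI
  rw [mem_freeSet]
  constructor
  · rintro ⟨hq, hqQ, hlow, hupp⟩
    rw [mem_pentagramPFinset] at hq
    obtain ⟨x, y, d, rfl⟩ := exists_cell (hq.resolve_left hqQ)
    have hv := (cell_mem_P ..).1 hq
    have h1 : height n I (x + 1) y ≤ d := by
      rw [height_le_iff hIP hI]
      by_cases hd : y ≤ d
      · exact Or.inr (Or.inl hd)
      · exact Or.inr (Or.inr (hlow _ (mem_pentagramPFinset.2 ((vtx_mem_P ..).2 (by omega)))
          ((covers_vtx_cell ..).2 (by omega))))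
    have h2 : height n I x (y + 1) ≤ d := by
      rw [height_le_iff hIP hI]
      by_cases hd : x ≤ d
      · exact Or.inl hd
      · exact Or.inr (Or.inr (hlow _ (mem_pentagramPFinset.2 ((vtx_mem_P ..).2 (by omega)))
          ((covers_vtx_cell ..).2 (by omega))))
    have h3 : d ≤ height n I x y := by
      by_contra hcon
      obtain ⟨c, rfl⟩ : ∃ c, d = c + 1 := ⟨d - 1, by omega⟩
      exact hupp _ ((vtx_mem_iff (x := x) (y := y) (c := c) hIP hI (by omega) (by omega)).2
        (by omega))
        ((covers_cell_vtx ..).2 (by omega))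
    have h4 : d < height n I (x + 1) (y + 1) := by
      by_contra hcon
      exact hupp _ ((vtx_mem_iff (x := x + 1) (y := y + 1) (c := d) hIP hI (by omega) (by omega)).2
        (by omega))
        ((covers_cell_vtx ..).2 (by omega))
    have s1 := hC.stepx x (by omega) y (by omega)
    have s2 := hC.stepy x (by omega) y (by omega)
    have s3 := hC.stepx x (by omega) (y + 1) (by omega)
    have hd : height n I x y = d := by omega
    exact ⟨x, by omega, y, by omega, ⟨by omega, by omega, by omega⟩, by rw [hd]⟩
  · rintro ⟨x, hx, y, hy, ⟨j1, j2, j3⟩, rfl⟩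
    have b1 := hC.le_x x y (by omega) (by omega)
    have b2 := hC.le_y x y (by omega) (by omega)
    have b3 := hC.add_le (x + 1) (y + 1) (by omega) (by omega)
    refine ⟨mem_pentagramPFinset.2 ((cell_mem_P ..).2 (by omega)), cell_notMem_Q _ _ _ _, ?_, ?_⟩
    · intro p hp hc
      have hpP := mem_pentagramPFinset.1 hp
      rcases vtx_or_cell hpP with ⟨x', y', c, rfl⟩ | ⟨x', y', d, rfl⟩
      · have hv := (vtx_mem_P ..).1 hpP
        rw [vtx_mem_iff hIP hI hv.1 hv.2.1]
        rcases (covers_vtx_cell ..).1 hc with ⟨rfl, ⟨rfl, rfl⟩ | ⟨rfl, rfl⟩⟩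
        · exact j1.le
        · exact j2.le
      · exact (not_covers_cell_cell _ _ _ _ _ _ _ hc).elim
    · intro p hp hc
      have hpP := mem_pentagramPFinset.1 (hIP hp)
      rcases vtx_or_cell hpP with ⟨x', y', c, rfl⟩ | ⟨x', y', d, rfl⟩
      · have hv := (vtx_mem_P ..).1 hpP
        rw [vtx_mem_iff hIP hI hv.1 hv.2.1] at hp
        rcases (covers_cell_vtx ..).1 hc with ⟨hc, rfl, rfl⟩ | ⟨hc, rfl, rfl⟩ <;> omega
      · exact (not_covers_cell_cell _ _ _ _ _ _ _ hc).elim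

lemma filter_eq_of_height_eq {J : Finset (ℤ × ℤ × ℤ)}
    (hIP : I ⊆ pentagramPFinset ((n : ℤ) + 1))
    (hI : IsCoverClosed (pentagramPFinset ((n : ℤ) + 1)) pentagramCovers I)
    (hJP : J ⊆ pentagramPFinset ((n : ℤ) + 1))
    (hJ : IsCoverClosed (pentagramPFinset ((n : ℤ) + 1)) pentagramCovers J)
    (h : ∀ x ≤ n + 1, ∀ y ≤ n + 1, height n I x y = height n J x y) :
    I.filter (· ∈ pentagramQ ((n : ℤ) + 1)) = J.filter (· ∈ pentagramQ ((n : ℤ) + 1)) := by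
  ext p
  simp only [Finset.mem_filter, and_congr_left_iff]
  intro hp
  obtain ⟨x, y, c, rfl⟩ := exists_vtx hp
  have hv := (vtx_mem_Q ..).1 hp
  rw [vtx_mem_iff hIP hI hv.1 hv.2.1, vtx_mem_iff hJP hJ hv.1 hv.2.1,
    h x (by omega) y (by omega)]

end

/-- An ideal of `P_{n+1}` whose heights are given by the corner-sum matrix `C`: all the points of
`Q_{n+1}` of level at least `C`, and all cells compatible with them. -/
def idealOf (n : ℕ) (C : ℕ → ℕ → ℕ) : Finset (ℤ × ℤ × ℤ) :=
  (pentagramPFinset ((n : ℤ) + 1)).filter fun p =>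
    (∃ x y c, p = vtx n x y c ∧ C x y ≤ c) ∨
    ∃ x y d, p = cell n x y d ∧ C (x + 1) y ≤ d ∧ C x (y + 1) ≤ d

lemma idealOf_subset (n : ℕ) (C : ℕ → ℕ → ℕ) : idealOf n C ⊆ pentagramPFinset ((n : ℤ) + 1) :=
  Finset.filter_subset _ _

lemma vtx_mem_idealOf {n : ℕ} {C : ℕ → ℕ → ℕ} {x y c : ℕ} :
    vtx n x y c ∈ idealOf n C ↔ (c < x ∧ c < y ∧ x + y ≤ c + (n + 1)) ∧ C x y ≤ c := by
  rw [idealOf, Finset.mem_filter, mem_pentagramPFinset, vtx_mem_P]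
  refine and_congr_right fun _ => ⟨?_, fun h => Or.inl ⟨x, y, c, rfl, h⟩⟩
  rintro (⟨x', y', c', e, h⟩ | ⟨x', y', d, e, _⟩)
  · obtain ⟨rfl, rfl, rfl⟩ := vtx_injective e
    exact h
  · exact (vtx_ne_cell _ _ _ _ _ _ _ e).elim

lemma cell_mem_idealOf {n : ℕ} {C : ℕ → ℕ → ℕ} {x y d : ℕ} :
    cell n x y d ∈ idealOf n C ↔
      (d ≤ x ∧ d ≤ y ∧ x + y ≤ d + n) ∧ C (x + 1) y ≤ d ∧ C x (y + 1) ≤ d := by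
  rw [idealOf, Finset.mem_filter, mem_pentagramPFinset, cell_mem_P]
  refine and_congr_right fun _ => ⟨?_, fun h => Or.inr ⟨x, y, d, rfl, h⟩⟩
  rintro (⟨x', y', c', e, _⟩ | ⟨x', y', d, e, h⟩)
  · exact (vtx_ne_cell _ _ _ _ _ _ _ e.symm).elim
  · obtain ⟨rfl, rfl, rfl⟩ := cell_injective e
    exact h

lemma idealOf_closed {n : ℕ} {C : ℕ → ℕ → ℕ} (hC : IsCornerSum n C) :
    IsCoverClosed (pentagramPFinset ((n : ℤ) + 1)) pentagramCovers (idealOf n C) := by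
  intro p hp q hq hpq
  have hpP := mem_pentagramPFinset.1 hp
  have hqP := mem_pentagramPFinset.1 (idealOf_subset n C hq)
  rcases vtx_or_cell hpP with ⟨x, y, c, rfl⟩ | ⟨x, y, d, rfl⟩ <;>
  rcases vtx_or_cell hqP with ⟨x', y', c', rfl⟩ | ⟨x', y', d', rfl⟩
  · exact (not_covers_vtx_vtx _ _ _ _ _ _ _ hpq).elim
  · rw [vtx_mem_P] at hpP
    rw [cell_mem_idealOf] at hq
    rw [vtx_mem_idealOf]
    refine ⟨hpP, ?_⟩
    rcases (covers_vtx_cell ..).1 hpq with ⟨rfl, ⟨rfl, rfl⟩ | ⟨rfl, rfl⟩⟩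
    · exact hq.2.1
    · exact hq.2.2
  · rw [cell_mem_P] at hpP
    rw [vtx_mem_idealOf] at hq
    rw [cell_mem_idealOf]
    refine ⟨hpP, ?_⟩
    rcases (covers_cell_vtx ..).1 hpq with ⟨rfl, rfl, rfl⟩ | ⟨rfl, rfl, rfl⟩
    · have := hC.stepx x (by omega) (y + 1) (by omega)
      have := hC.stepy (x + 1) (by omega) y (by omega)
      omega
    · have := hC.stepx x' (by omega) y' (by omega)
      have := hC.stepy x' (by omega) y' (by omega)
      omega
  · exact (not_covers_cell_cell _ _ _ _ _ _ _ hpq).elim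

lemma height_idealOf {n : ℕ} {C : ℕ → ℕ → ℕ} (hC : IsCornerSum n C) (x y : ℕ)
    (hx : x ≤ n + 1) (hy : y ≤ n + 1) : height n (idealOf n C) x y = C x y := by
  refine eq_of_forall_ge_iff fun c => ?_
  rw [height_le_iff (idealOf_subset n C) (idealOf_closed hC), Above, vtx_mem_idealOf]
  have b1 := hC.le_x x y hx hy
  have b2 := hC.le_y x y hx hy
  have b3 := hC.add_le x y hx hy
  omega
/-! ### The weighted sum -/

lemma Pattern.card_cells {n : ℕ} {Z : ℕ → ℕ → Prop} {σ τ : ℕ → ℕ} {x₀ y₀ : ℕ}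
    (h : Pattern n Z σ τ x₀ y₀) :
    ((Finset.range (n + 1) ×ˢ Finset.range (n + 1)).filter fun a => Z a.1 a.2).card = n + 2 := by
  have e : ((Finset.range (n + 1) ×ˢ Finset.range (n + 1)).filter fun a => Z a.1 a.2) =
      insert (x₀, n) ((Finset.range (n + 1)).image fun x => (x, σ x)) := by
    ext ⟨x, y⟩
    simp only [Finset.mem_filter, Finset.mem_product, Finset.mem_range, Finset.mem_insert,
      Finset.mem_image, Prod.mk.injEq]
    constructor
    · rintro ⟨⟨hx, hy⟩, hz⟩
      rcases (h.iff_σ x (by omega) y (by omega)).1 hz with rfl | hz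
      · exact Or.inr ⟨x, hx, rfl, rfl⟩
      · exact Or.inl hz
    · rintro (⟨rfl, rfl⟩ | ⟨x', hx', rfl, rfl⟩)
      · have := h.x₀_lt
        exact ⟨by omega, (h.iff_σ _ (by omega) _ le_rfl).2 (Or.inr ⟨rfl, rfl⟩)⟩
      · have := h.σ_lt x'
        exact ⟨by omega, (h.iff_σ _ (by omega) _ (by omega)).2 (Or.inl rfl)⟩
  rw [e, Finset.card_insert_of_notMem, Finset.card_image_of_injective, Finset.card_range]
  · intro a b hab
    exact (Prod.mk.inj hab).1
  · intro hmem
    obtain ⟨x, _, hx⟩ := Finset.mem_image.1 hmem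
    have := h.σ_lt x
    have := (Prod.mk.inj hx).2
    omega

lemma exists_signed_monomial {α κ : Type*} (s : Finset α) (g : α → MvPolynomial κ ℤ)
    (hg : ∀ p, g p = -1 ∨ ∃ a, g p = X a) :
    ∃ (ε : ℤ) (d : κ →₀ ℕ), (ε = 1 ∨ ε = -1) ∧ ∏ p ∈ s, g p = C ε * monomial d 1 := by
  induction s using Finset.induction_on with
  | empty => exact ⟨1, 0, Or.inl rfl, by simp⟩
  | insert p s hp ih =>
    obtain ⟨ε, d, hε, h⟩ := ih
    rw [Finset.prod_insert hp, h]
    rcases hg p with hgp | ⟨a, hgp⟩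
    · exact ⟨-ε, d, by omega, by rw [hgp, map_neg]; ring⟩
    · refine ⟨ε, Finsupp.single a 1 + d, hε, ?_⟩
      rw [hgp, X, mul_left_comm, monomial_mul, one_mul]

/-- The image under `φ ∘ R_n` of the variable `y_{3r+s+j}` attached to `p = (r,s,t)`. -/
def weight (n : ℕ) (j : ℤ) (p : ℤ × ℤ × ℤ) : MvPolynomial (ZMod (2 * n)) ℤ :=
  pentagramPhi n (pentagramR n (X (3 * p.1 + p.2.1 + j)))

lemma weight_eq (n : ℕ) (j : ℤ) (p : ℤ × ℤ × ℤ) : weight n j p =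
    if 2 ≤ ((3 * p.1 + p.2.1 + j : ℤ) : ZMod (2 * n)).val ∧
      ((3 * p.1 + p.2.1 + j : ℤ) : ZMod (2 * n)).val ≤ 2 * n - 2 ∧
      2 ∣ ((3 * p.1 + p.2.1 + j : ℤ) : ZMod (2 * n)).val
    then -1 else X ((3 * p.1 + p.2.1 + j : ℤ) : ZMod (2 * n)) := by
  simp only [weight, pentagramPhi, pentagramR, AlgHom.toRingHom_eq_coe, RingHom.coe_coe, aeval_X]

/-- For `j = n + 2m` the cell at `(x, y)` carries the variable of index `2(2x + y + m - n)`, which is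
even, so its weight is `-1` unless this index vanishes modulo `2n`. -/
lemma weight_cell (n : ℕ) (hn : 3 ≤ n) (m : ℤ) (x y d : ℕ) :
    weight n (n + 2 * m) (cell n x y d) =
      if (n : ℤ) ∣ 2 * x + y + m then X 0 else -1 := by
  have : NeZero (2 * n) := ⟨by omega⟩
  rw [weight_eq]
  have e : 3 * (cell n x y d).1 + (cell n x y d).2.1 + (n + 2 * m) =
      2 * (2 * x + y + m - n) := by
    simp only [cell]; ring
  rw [e]
  set i : ℤ := 2 * x + y + m with hi
  have hval := ZMod.val_intCast (n := 2 * n) (2 * (i - n))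
  rw [show ((2 * n : ℕ) : ℤ) = 2 * n by push_cast; ring, Int.mul_emod_mul_of_pos _ _ two_pos,
    Int.sub_emod_right] at hval
  set v := ((2 * (i - n) : ℤ) : ZMod (2 * n)).val with hv
  have h1 := Int.emod_nonneg i (by omega : (n : ℤ) ≠ 0)
  have h2 := Int.emod_lt_of_pos i (by omega : (0 : ℤ) < n)
  by_cases hdvd : (n : ℤ) ∣ i
  · have h0 : i % n = 0 := Int.emod_eq_zero_of_dvd hdvd
    have hv0 : v = 0 := by omega
    rw [if_neg (by omega), if_pos hdvd, (ZMod.val_eq_zero _).1 hv0]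
  · have h0 : i % n ≠ 0 := fun h => hdvd (Int.dvd_of_emod_eq_zero h)
    rw [if_pos (by omega), if_neg hdvd]

theorem stmt13 (n : ℕ) (hn : 3 ≤ n) (hodd : Odd (n : ℤ)) (j : ℤ) (hj : Odd j)
    (hjn : ¬ (2 * (n : ℤ)) ∣ (j - n)) :
    ∃ (ε : ℤ) (d : ZMod (2 * n) →₀ ℕ), (ε = 1 ∨ ε = -1) ∧
      pentagramPhi n (pentagramR n (pentagramF j (n + 1))) =
        C ε * monomial d 1 * (1 + X (0 : ZMod (2 * n))) ^ (n + 2) := by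
  obtain ⟨m, rfl⟩ : ∃ m : ℤ, j = n + 2 * m := by
    obtain ⟨u, hu⟩ := hodd
    obtain ⟨v, hv⟩ := hj
    exact ⟨v - u, by omega⟩
  have hm : ¬ (n : ℤ) ∣ m := fun h => hjn (by
    rw [add_sub_cancel_left]
    exact mul_dvd_mul_left 2 h)
  obtain ⟨σ, τ, x₀, y₀, hZ⟩ := exists_pattern n hn hodd m hm
  set K := cornerSum n σ x₀ y₀ with hK
  have hKC : IsCornerSum n K := hZ.isCornerSum
  set J := idealOf n K with hJ
  have hJP : J ⊆ pentagramPFinset ((n : ℤ) + 1) := idealOf_subset n K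
  have hJc : IsCoverClosed (pentagramPFinset ((n : ℤ) + 1)) pentagramCovers J :=
    idealOf_closed hKC
  have hF : pentagramPhi n (pentagramR n (pentagramF (n + 2 * m) (n + 1))) =
      ∑ I ∈ (pentagramPFinset ((n : ℤ) + 1)).powerset.filter
        (fun I => IsCoverClosed (pentagramPFinset ((n : ℤ) + 1)) pentagramCovers I),
        ∏ p ∈ I, weight n (n + 2 * m) p := by
    simp only [pentagramF, map_sum, map_prod]
    refine Finset.sum_congr (Finset.filter_congr fun I hI => ?_) fun _ _ => rfl
    exact isPentagramOrderIdeal_iff (Finset.mem_powerset.1 hI)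
  have huniq : ∀ I ⊆ pentagramPFinset ((n : ℤ) + 1),
      IsCoverClosed (pentagramPFinset ((n : ℤ) + 1)) pentagramCovers I →
      (∀ q ∈ freeSet (pentagramPFinset ((n : ℤ) + 1)) (· ∈ pentagramQ ((n : ℤ) + 1))
        pentagramCovers I, weight n (n + 2 * m) q ≠ -1) →
      I.filter (· ∈ pentagramQ ((n : ℤ) + 1)) = J.filter (· ∈ pentagramQ ((n : ℤ) + 1)) := by
    intro I hIP hI hfree
    refine filter_eq_of_height_eq hIP hI hJP hJc fun x hx y hy => ?_
    rw [height_idealOf hKC x y hx hy]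
    refine hZ.unique (height_isCornerSum hIP hI) (fun x hx y hy hjump => ?_) x y hx hy
    have := hfree _ ((mem_freeSet_iff hIP hI _).2 ⟨x, hx, y, hy, hjump, rfl⟩)
    rw [weight_cell n hn] at this
    by_contra hcon
    exact this (if_neg hcon)
  rw [hF, sum_ideals_eq _ (· ∈ pentagramQ ((n : ℤ) + 1)) _ (covers_bipartite n) _ J hJP hJc huniq]
  have hfree : freeSet (pentagramPFinset ((n : ℤ) + 1)) (· ∈ pentagramQ ((n : ℤ) + 1))
      pentagramCovers J =
      ((Finset.range (n + 1) ×ˢ Finset.range (n + 1)).filter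
        fun a => (n : ℤ) ∣ 2 * a.1 + a.2 + m).image fun a => cell n a.1 a.2 (K a.1 a.2) := by
    ext q
    rw [mem_freeSet_iff hJP hJc, Finset.mem_image]
    have hjump : ∀ x ≤ n, ∀ y ≤ n, IsJump (height n J) x y ↔ (n : ℤ) ∣ 2 * x + y + m := by
      intro x hx y hy
      rw [← hZ.isJump_iff x y hx hy, IsJump, IsJump,
        height_idealOf hKC x y (by omega) (by omega),
        height_idealOf hKC (x + 1) y (by omega) (by omega),
        height_idealOf hKC x (y + 1) (by omega) (by omega),
        height_idealOf hKC (x + 1) (y + 1) (by omega) (by omega)]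
    constructor
    · rintro ⟨x, hx, y, hy, h, rfl⟩
      refine ⟨(x, y), Finset.mem_filter.2 ⟨Finset.mem_product.2 ⟨Finset.mem_range.2 (by omega),
        Finset.mem_range.2 (by omega)⟩, (hjump x hx y hy).1 h⟩, ?_⟩
      rw [height_idealOf hKC x y (by omega) (by omega)]
    · rintro ⟨⟨x, y⟩, h, rfl⟩
      simp only [Finset.mem_filter, Finset.mem_product, Finset.mem_range] at h
      refine ⟨x, by omega, y, by omega, (hjump x (by omega) y (by omega)).2 h.2, ?_⟩
      rw [height_idealOf hKC x y (by omega) (by omega)]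
  obtain ⟨ε, d, hε, hprod⟩ := exists_signed_monomial (forcedSet
    (pentagramPFinset ((n : ℤ) + 1)) (· ∈ pentagramQ ((n : ℤ) + 1)) pentagramCovers J)
    (weight n (n + 2 * m)) (fun p => by
        rw [weight_eq]
        split_ifs
        · exact Or.inl rfl
        · exact Or.inr ⟨_, rfl⟩)
  refine ⟨ε, d, hε, ?_⟩
  rw [hprod]
  congr 1
  rw [hfree, Finset.prod_image]
  · rw [Finset.prod_congr rfl (g := fun _ => (1 + X 0 : MvPolynomial (ZMod (2 * n)) ℤ))
      (fun a ha => by rw [weight_cell n hn, if_pos (Finset.mem_filter.1 ha).2]), Finset.prod_const]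
    congr 1
    convert hZ.card_cells
  · intro a _ b _ hab
    obtain ⟨h1, h2, _⟩ := cell_injective hab
    exact Prod.ext h1 h2

end
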